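/- Let C be a d-dimensional copula and for m ∈ ℕ set C_m(u) := C(u^{1/m})^m (the copula of the componentwise maximum of m i.i.d. random vectors with copula C and continuous margins). Suppose the second order condition holds for (C_m) with limit C_∞, auxiliary function φ regularly varying of index ρ_φ < 0 and limit function S, and suppose C_∞(u) > 0 for all u ∈ (0,1]^d. Then S satisfies the homogeneity relation S(u^s)/C_∞(u^s) = s^{1−ρ_φ} · S(u)/C_∞(u) for every s > 0 and every u ∈ (0,1]^d (powers of vectors componentwise). -/

import Mathlib

/-!
The argument rests on the exact identity `C_{km}(u^k) = C_m(u)^k` for positive integers `k`, `m`.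
Along `m = 2^i` the index `ρ_φ < 0` forces `φ(m) → 0`, so passing to the limit gives the
max-stability `C_∞(u^k) = C_∞(u)^k`. Subtracting this from the identity, dividing by `φ(m)`, and
using `φ(km)/φ(m) → k^ρ_φ` on the left and the factorisation of `a^k - b^k` on the right yields
`k^ρ_φ S(u^k) = k C_∞(u)^{k-1} S(u)` (`secondOrder_pow`), which is the claim for `s = k`.
Replacing `u` by `u^{1/n}` gives it for rational `s = p/n`. It extends to real `s` because `S` is
continuous and `C_∞(u^s) = C_∞(u)^s` for all `s > 0`, the latter by monotonicity of `C_∞`.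
Working along powers of two avoids any uniform convergence theorem for regularly varying sequences.
-/

open MeasureTheory Filter Set

noncomputable section

/-- The closed unit cube `[0,1]^d` in `ℝ^d`. -/
def unitBox (d : ℕ) : Set (Fin d → ℝ) := {u | ∀ j, u j ∈ Set.Icc (0:ℝ) 1}

/-- `C` is (the restriction to `[0,1]^d` of) the distribution function of a Borel probability
measure concentrated on `[0,1]^d` whose one-dimensional margins are uniform on `[0,1]`. -/
def IsCopula {d : ℕ} (C : (Fin d → ℝ) → ℝ) : Prop :=
  ∃ μ : Measure (Fin d → ℝ), IsProbabilityMeasure μ ∧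
    μ (unitBox d)ᶜ = 0 ∧
    (∀ u ∈ unitBox d, C u = (μ {x | ∀ j, x j ≤ u j}).toReal) ∧
    (∀ j : Fin d, ∀ t ∈ Set.Icc (0:ℝ) 1, (μ {x | x j ≤ t}).toReal = t)

/-- `φ` is regularly varying (along the integers) with index `ρ`. -/
def RegVar (φ : ℕ → ℝ) (ρ : ℝ) : Prop :=
  ∀ x : ℝ, 0 < x → Tendsto (fun k : ℕ => φ ⌊x * (k:ℝ)⌋₊ / φ k) atTop (nhds (x ^ ρ))

/-- The second order condition: `sup_u |C_m(u) − C_∞(u) − φ(m) S(u)| = o(φ(m))` with `φ`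
regularly varying of negative index and `S` continuous and not identically zero. -/
def SecondOrderCond {d : ℕ} (C : ℕ → (Fin d → ℝ) → ℝ) (Cinf : (Fin d → ℝ) → ℝ)
    (φ : ℕ → ℝ) (ρφ : ℝ) (S : (Fin d → ℝ) → ℝ) : Prop :=
  (∀ m, 0 < φ m) ∧ ρφ < 0 ∧ RegVar φ ρφ ∧
  ContinuousOn S (unitBox d) ∧ (∃ u ∈ unitBox d, S u ≠ 0) ∧
  TendstoUniformlyOn (fun m u => (C m u - Cinf u) / φ m) S atTop (unitBox d)

/-! ### Regular variation along powers of two -/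

lemma RegVar.tendsto_mul {φ : ℕ → ℝ} {ρ : ℝ} (h : RegVar φ ρ) {k : ℕ} (hk : 0 < k) :
    Tendsto (fun m : ℕ => φ (k * m) / φ m) atTop (nhds ((k:ℝ) ^ ρ)) := by
  refine (h k (by exact_mod_cast hk)).congr fun m => ?_
  rw [← Nat.cast_mul, Nat.floor_natCast]

lemma tendsto_two_pow : Tendsto (fun i : ℕ => 2 ^ i) atTop (atTop : Filter ℕ) :=
  tendsto_pow_atTop_atTop_of_one_lt one_lt_two

/-- A negative index forces `φ(2^i) → 0`, by the ratio test. -/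
lemma RegVar.tendsto_two_pow_zero {φ : ℕ → ℝ} {ρ : ℝ} (h : RegVar φ ρ) (hρ : ρ < 0)
    (hφ : ∀ m, 0 < φ m) : Tendsto (fun i : ℕ => φ (2 ^ i)) atTop (nhds 0) := by
  have hlim := (h.tendsto_mul two_pos).comp tendsto_two_pow
  have hlt : ((2:ℕ):ℝ) ^ ρ < 1 := Real.rpow_lt_one_of_one_lt_of_neg (by norm_num) hρ
  refine (summable_of_ratio_test_tendsto_lt_one hlt
    (Eventually.of_forall fun i => (hφ _).ne') (hlim.congr fun i => ?_)).tendsto_atTop_zero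
  simp only [Function.comp_apply, Real.norm_eq_abs, abs_of_pos (hφ _), pow_succ']

lemma tendsto_two_pow_mul_zero {φ : ℕ → ℝ} {ρ : ℝ} (h : RegVar φ ρ) (hρ : ρ < 0)
    (hφ : ∀ m, 0 < φ m) {k : ℕ} (hk : 0 < k) :
    Tendsto (fun i : ℕ => φ (k * 2 ^ i)) atTop (nhds 0) := by
  have := ((h.tendsto_mul hk).comp tendsto_two_pow).mul (h.tendsto_two_pow_zero hρ hφ)
  rw [mul_zero] at this
  refine this.congr fun i => ?_
  simp only [Function.comp_apply]
  exact div_mul_cancel₀ _ (hφ _).ne'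

/-! ### Copulas on the unit cube -/

lemma rpow_mem_unitBox {d : ℕ} {u : Fin d → ℝ} (hu : u ∈ unitBox d) {s : ℝ} (hs : 0 ≤ s) :
    (fun j => u j ^ s) ∈ unitBox d := fun j =>
  ⟨Real.rpow_nonneg (hu j).1 _, Real.rpow_le_one (hu j).1 (hu j).2 hs⟩

lemma IsCopula.nonneg {d : ℕ} {C : (Fin d → ℝ) → ℝ} (hC : IsCopula C) {u : Fin d → ℝ}
    (hu : u ∈ unitBox d) : 0 ≤ C u := by
  obtain ⟨μ, -, -, h, -⟩ := hC
  rw [h u hu]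
  exact ENNReal.toReal_nonneg

lemma IsCopula.mono {d : ℕ} {C : (Fin d → ℝ) → ℝ} (hC : IsCopula C) {u v : Fin d → ℝ}
    (hu : u ∈ unitBox d) (hv : v ∈ unitBox d) (huv : ∀ j, u j ≤ v j) : C u ≤ C v := by
  obtain ⟨μ, hμ, -, h, -⟩ := hC
  rw [h u hu, h v hv]
  exact ENNReal.toReal_mono (measure_ne_top _ _)
    (measure_mono fun x hx j => (hx j).trans (huv j))

/-! ### Integer exponents -/

section

variable {d : ℕ} {C : (Fin d → ℝ) → ℝ} {Cm : ℕ → (Fin d → ℝ) → ℝ}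
  {Cinf : (Fin d → ℝ) → ℝ} {φ : ℕ → ℝ} {ρφ : ℝ} {S : (Fin d → ℝ) → ℝ}

/-- The exact relation `C_{km}(u^k) = C_m(u)^k`. -/
lemma Cm_mul_pow
    (hCm : ∀ m : ℕ, ∀ u ∈ unitBox d, Cm m u = (C fun j => u j ^ ((m:ℝ)⁻¹)) ^ (m:ℝ))
    {k : ℕ} (hk : 0 < k) (m : ℕ) {u : Fin d → ℝ} (hu : u ∈ unitBox d) :
    Cm (k * m) (fun j => u j ^ (k:ℝ)) = Cm m u ^ k := by
  have hk' : (k:ℝ) ≠ 0 := by exact_mod_cast hk.ne'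
  rw [hCm _ _ (rpow_mem_unitBox hu (Nat.cast_nonneg k)), hCm _ _ hu, Real.rpow_natCast,
    Real.rpow_natCast, ← pow_mul, mul_comm m k]
  congr 2
  ext j
  rw [← Real.rpow_mul (hu j).1]
  congr 1
  push_cast
  rw [mul_inv, mul_inv_cancel_left₀ hk']

lemma tendsto_Cm (h2 : SecondOrderCond Cm Cinf φ ρφ S) {k : ℕ} (hk : 0 < k)
    {u : Fin d → ℝ} (hu : u ∈ unitBox d) :
    Tendsto (fun i : ℕ => Cm (k * 2 ^ i) u) atTop (nhds (Cinf u)) := by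
  obtain ⟨hφ, hρ, hrv, -, -, hunif⟩ := h2
  have h1 : Tendsto (fun i : ℕ => k * 2 ^ i) atTop atTop :=
    tendsto_two_pow.const_mul_atTop' hk
  have := (((hunif.tendsto_at hu).comp h1).mul
    (tendsto_two_pow_mul_zero hrv hρ hφ hk)).add_const (Cinf u)
  rw [mul_zero, zero_add] at this
  refine this.congr fun i => ?_
  simp only [Function.comp_apply]
  rw [div_mul_cancel₀ _ (hφ _).ne', sub_add_cancel]

lemma tendsto_Cm' (h2 : SecondOrderCond Cm Cinf φ ρφ S)
    {u : Fin d → ℝ} (hu : u ∈ unitBox d) :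
    Tendsto (fun i : ℕ => Cm (2 ^ i) u) atTop (nhds (Cinf u)) := by
  simpa using tendsto_Cm h2 one_pos hu

/-- Max-stability of `C_∞` for integer powers. -/
lemma Cinf_pow
    (hCm : ∀ m : ℕ, ∀ u ∈ unitBox d, Cm m u = (C fun j => u j ^ ((m:ℝ)⁻¹)) ^ (m:ℝ))
    (h2 : SecondOrderCond Cm Cinf φ ρφ S) {k : ℕ} (hk : 0 < k)
    {u : Fin d → ℝ} (hu : u ∈ unitBox d) :
    Cinf (fun j => u j ^ (k:ℝ)) = Cinf u ^ k := by
  refine tendsto_nhds_unique (tendsto_Cm h2 hk (rpow_mem_unitBox hu (Nat.cast_nonneg k))) ?_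
  refine ((tendsto_Cm' h2 hu).pow k).congr fun i => ?_
  rw [Cm_mul_pow hCm hk _ hu]

/-- The second order expansion of `C_{km}(u^k) = C_m(u)^k`. -/
lemma secondOrder_pow
    (hCm : ∀ m : ℕ, ∀ u ∈ unitBox d, Cm m u = (C fun j => u j ^ ((m:ℝ)⁻¹)) ^ (m:ℝ))
    (h2 : SecondOrderCond Cm Cinf φ ρφ S) {k : ℕ} (hk : 0 < k)
    {u : Fin d → ℝ} (hu : u ∈ unitBox d) :
    S (fun j => u j ^ (k:ℝ)) * (k:ℝ) ^ ρφ = (k * Cinf u ^ (k - 1)) * S u := by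
  obtain ⟨hφ, hρ, hrv, -, -, hunif⟩ := id h2
  have h1 : Tendsto (fun i : ℕ => k * 2 ^ i) atTop atTop :=
    tendsto_two_pow.const_mul_atTop' hk
  have hL := ((hunif.tendsto_at (rpow_mem_unitBox hu (Nat.cast_nonneg k))).comp h1).mul
    ((hrv.tendsto_mul hk).comp tendsto_two_pow)
  have hR := (tendsto_finsetSum (Finset.range k) fun l _ =>
    ((tendsto_Cm' h2 hu).pow l).mul_const (Cinf u ^ (k - 1 - l))).mul
    ((hunif.tendsto_at hu).comp tendsto_two_pow)
  have hsum : ∑ l ∈ Finset.range k, Cinf u ^ l * Cinf u ^ (k - 1 - l)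
      = k * Cinf u ^ (k - 1) := by
    rw [Finset.sum_congr rfl (g := fun _ => Cinf u ^ (k - 1))]
    · simp
    · intro l hl
      rw [← pow_add, Nat.add_sub_cancel' (Nat.le_sub_one_of_lt (Finset.mem_range.1 hl))]
  rw [hsum] at hR
  refine tendsto_nhds_unique hL (hR.congr fun i => ?_)
  simp only [Function.comp_apply]
  rw [Cm_mul_pow hCm hk _ hu, Cinf_pow hCm h2 hk hu, ← mul_div_assoc, geom_sum₂_mul,
    div_mul_div_cancel₀ (hφ _).ne']

lemma ratio_nat
    (hCm : ∀ m : ℕ, ∀ u ∈ unitBox d, Cm m u = (C fun j => u j ^ ((m:ℝ)⁻¹)) ^ (m:ℝ))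
    (h2 : SecondOrderCond Cm Cinf φ ρφ S) {k : ℕ} (hk : 0 < k)
    {u : Fin d → ℝ} (hu : u ∈ unitBox d) (hpos : 0 < Cinf u) :
    S (fun j => u j ^ (k:ℝ)) / Cinf (fun j => u j ^ (k:ℝ)) =
      (k:ℝ) ^ ((1:ℝ) - ρφ) * (S u / Cinf u) := by
  have hk' : (0:ℝ) < k := by exact_mod_cast hk
  have h := secondOrder_pow hCm h2 hk hu
  have hkρ : (0:ℝ) < (k:ℝ) ^ ρφ := Real.rpow_pos_of_pos hk' _
  have hpow : Cinf u ^ k = Cinf u ^ (k - 1) * Cinf u := by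
    rw [← pow_succ, Nat.sub_add_cancel hk]
  have hpos' : 0 < Cinf u ^ (k - 1) := pow_pos hpos _
  rw [Cinf_pow hCm h2 hk hu, Real.rpow_sub hk', Real.rpow_one, hpow, eq_div_of_mul_eq hkρ.ne' h]
  field_simp

/-- `C_∞` is monotone along the curve `s ↦ u^s`. -/
lemma Cinf_antitone (hC : IsCopula C)
    (hCm : ∀ m : ℕ, ∀ u ∈ unitBox d, Cm m u = (C fun j => u j ^ ((m:ℝ)⁻¹)) ^ (m:ℝ))
    (h2 : SecondOrderCond Cm Cinf φ ρφ S) {u : Fin d → ℝ} (hu : ∀ j, u j ∈ Set.Ioc (0:ℝ) 1)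
    {s t : ℝ} (hs : 0 ≤ s) (hst : s ≤ t) :
    Cinf (fun j => u j ^ t) ≤ Cinf (fun j => u j ^ s) := by
  have hub : u ∈ unitBox d := fun j => ⟨(hu j).1.le, (hu j).2⟩
  have hus := rpow_mem_unitBox hub hs
  have hut := rpow_mem_unitBox hub (hs.trans hst)
  refine le_of_tendsto_of_tendsto' (tendsto_Cm' h2 hut) (tendsto_Cm' h2 hus) fun i => ?_
  have hi : (0:ℝ) ≤ (((2 ^ i : ℕ) : ℝ))⁻¹ := by positivity
  rw [hCm _ _ hut, hCm _ _ hus]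
  refine Real.rpow_le_rpow (hC.nonneg (rpow_mem_unitBox hut hi)) ?_ (Nat.cast_nonneg _)
  refine hC.mono (rpow_mem_unitBox hut hi) (rpow_mem_unitBox hus hi) fun j => ?_
  exact Real.rpow_le_rpow (hut j).1
    (Real.rpow_le_rpow_of_exponent_ge (hu j).1 (hu j).2 hst) hi

/-! ### Rational and real exponents -/

lemma pos_rat_eq {q : ℚ} (hq : 0 < q) :
    ∃ p n : ℕ, 0 < p ∧ 0 < n ∧ (q:ℝ) = (n:ℝ)⁻¹ * p := by
  refine ⟨q.num.toNat, q.den, ?_, q.den_pos, ?_⟩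
  · have := Rat.num_pos.2 hq
    omega
  · have h1 : ((q.num.toNat : ℕ) : ℝ) = (q.num : ℝ) := by
      exact_mod_cast congrArg (Int.cast : ℤ → ℝ) (Int.toNat_of_nonneg (Rat.num_pos.2 hq).le)
    rw [h1, Rat.cast_def, div_eq_inv_mul]

/-- The claim and max-stability for rational exponents, from the integer case at `u^{1/n}`. -/
lemma rat_case
    (hCm : ∀ m : ℕ, ∀ u ∈ unitBox d, Cm m u = (C fun j => u j ^ ((m:ℝ)⁻¹)) ^ (m:ℝ))
    (h2 : SecondOrderCond Cm Cinf φ ρφ S)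
    (hCinfpos : ∀ u : Fin d → ℝ, (∀ j, u j ∈ Set.Ioc (0:ℝ) 1) → 0 < Cinf u)
    {u : Fin d → ℝ} (hu : ∀ j, u j ∈ Set.Ioc (0:ℝ) 1) {q : ℚ} (hq : 0 < q) :
    Cinf (fun j => u j ^ (q:ℝ)) = Cinf u ^ (q:ℝ) ∧
    S (fun j => u j ^ (q:ℝ)) / Cinf (fun j => u j ^ (q:ℝ)) =
      (q:ℝ) ^ ((1:ℝ) - ρφ) * (S u / Cinf u) := by
  obtain ⟨p, n, hp, hn, hpn⟩ := pos_rat_eq hq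
  have hub : u ∈ unitBox d := fun j => ⟨(hu j).1.le, (hu j).2⟩
  have hn' : (0:ℝ) < n := by exact_mod_cast hn
  have hp' : (0:ℝ) < p := by exact_mod_cast hp
  obtain ⟨v, hv⟩ : ∃ v : Fin d → ℝ, v = fun j => u j ^ ((n:ℝ)⁻¹) := ⟨_, rfl⟩
  have hvb : v ∈ unitBox d := by
    rw [hv]
    exact rpow_mem_unitBox hub (inv_pos.2 hn').le
  have hvpos : 0 < Cinf v := hCinfpos v fun j => by
    refine ⟨?_, (hvb j).2⟩
    rw [hv]
    exact Real.rpow_pos_of_pos (hu j).1 _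
  have hvn : (fun j => v j ^ (n:ℝ)) = u := by
    ext j
    simp only [hv]
    rw [← Real.rpow_mul (hub j).1, inv_mul_cancel₀ hn'.ne', Real.rpow_one]
  have hvp : (fun j => v j ^ (p:ℝ)) = fun j => u j ^ (q:ℝ) := by
    ext j
    simp only [hv]
    rw [← Real.rpow_mul (hub j).1, hpn]
  have hn1 := ratio_nat hCm h2 hn hvb hvpos
  have hp1 := ratio_nat hCm h2 hp hvb hvpos
  have hn2 := Cinf_pow hCm h2 hn hvb
  have hp2 := Cinf_pow hCm h2 hp hvb
  rw [hvn] at hn1 hn2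
  rw [hvp] at hp1 hp2
  refine ⟨?_, ?_⟩
  · rw [hp2, hn2, hpn, Real.rpow_mul (pow_nonneg hvpos.le _), Real.pow_rpow_inv_natCast hvpos.le
      hn.ne', Real.rpow_natCast]
  · rw [hp1, hn1, hpn, Real.mul_rpow (inv_pos.2 hn').le hp'.le, Real.inv_rpow hn'.le]
    have : (0:ℝ) < (n:ℝ) ^ ((1:ℝ) - ρφ) := Real.rpow_pos_of_pos hn' _
    field_simp

/-- Max-stability of `C_∞` for all positive real exponents: monotonicity squeezes `C_∞(u^s)`
between rational exponents. -/
lemma Cinf_rpow (hC : IsCopula C)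
    (hCm : ∀ m : ℕ, ∀ u ∈ unitBox d, Cm m u = (C fun j => u j ^ ((m:ℝ)⁻¹)) ^ (m:ℝ))
    (h2 : SecondOrderCond Cm Cinf φ ρφ S)
    (hCinfpos : ∀ u : Fin d → ℝ, (∀ j, u j ∈ Set.Ioc (0:ℝ) 1) → 0 < Cinf u)
    {u : Fin d → ℝ} (hu : ∀ j, u j ∈ Set.Ioc (0:ℝ) 1) {s : ℝ} (hs : 0 < s) :
    Cinf (fun j => u j ^ s) = Cinf u ^ s := by
  have hpos := hCinfpos u hu
  have hcont : Tendsto (fun x : ℝ => Cinf u ^ x) (nhds s) (nhds (Cinf u ^ s)) :=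
    (Real.continuous_const_rpow hpos.ne').tendsto s
  obtain ⟨a, -, ha, hal⟩ := Real.exists_seq_rat_strictAnti_tendsto s
  obtain ⟨b, -, hb, hbl⟩ := Real.exists_seq_rat_strictMono_tendsto s
  refine le_antisymm ?_ ?_
  · refine ge_of_tendsto (hcont.comp hbl) ?_
    filter_upwards [hbl.eventually (lt_mem_nhds hs)] with i hi
    have hbi : 0 < b i := by exact_mod_cast hi
    rw [Function.comp_apply, ← (rat_case hCm h2 hCinfpos hu hbi).1]
    exact Cinf_antitone hC hCm h2 hu (le_of_lt hi) (hb i).le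
  · refine le_of_tendsto (hcont.comp hal) (Eventually.of_forall fun i => ?_)
    have hai : 0 < a i := by exact_mod_cast hs.trans (ha i)
    rw [Function.comp_apply, ← (rat_case hCm h2 hCinfpos hu hai).1]
    exact Cinf_antitone hC hCm h2 hu hs.le (ha i).le

end

/-- homogeneity of the second order limit function `S`. -/
theorem statement14 {d : ℕ} (C : (Fin d → ℝ) → ℝ) (hC : IsCopula C)
    (Cm : ℕ → (Fin d → ℝ) → ℝ)
    (hCm : ∀ m : ℕ, ∀ u ∈ unitBox d, Cm m u = (C fun j => u j ^ ((m:ℝ)⁻¹)) ^ (m:ℝ))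
    (Cinf : (Fin d → ℝ) → ℝ) (φ : ℕ → ℝ) (ρφ : ℝ) (S : (Fin d → ℝ) → ℝ)
    (h2 : SecondOrderCond Cm Cinf φ ρφ S)
    (hCinfpos : ∀ u : Fin d → ℝ, (∀ j, u j ∈ Set.Ioc (0:ℝ) 1) → 0 < Cinf u) :
    ∀ s : ℝ, 0 < s → ∀ u : Fin d → ℝ, (∀ j, u j ∈ Set.Ioc (0:ℝ) 1) →
      S (fun j => u j ^ s) / Cinf (fun j => u j ^ s) =
        s ^ ((1:ℝ) - ρφ) * (S u / Cinf u) := by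
  intro s hs u hu
  have hub : u ∈ unitBox d := fun j => ⟨(hu j).1.le, (hu j).2⟩
  have hpos := hCinfpos u hu
  obtain ⟨a, -, ha, hal⟩ := Real.exists_seq_rat_strictAnti_tendsto s
  have ha0 : ∀ i, (0:ℝ) < a i := fun i => hs.trans (ha i)
  have hS : Tendsto (fun i => S fun j => u j ^ (a i : ℝ)) atTop (nhds (S fun j => u j ^ s)) := by
    refine (h2.2.2.2.1 _ (rpow_mem_unitBox hub hs.le)).tendsto.comp
      (tendsto_nhdsWithin_iff.2 ⟨?_, Eventually.of_forall fun i =>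
        rpow_mem_unitBox hub (ha0 i).le⟩)
    exact tendsto_pi_nhds.2 fun j =>
      ((Real.continuous_const_rpow (hu j).1.ne').tendsto s).comp hal
  have hCc : Tendsto (fun i => Cinf u ^ (a i : ℝ)) atTop (nhds (Cinf u ^ s)) :=
    ((Real.continuous_const_rpow hpos.ne').tendsto s).comp hal
  have hR : Tendsto (fun i => (a i : ℝ) ^ ((1:ℝ) - ρφ) * (S u / Cinf u)) atTop
      (nhds (s ^ ((1:ℝ) - ρφ) * (S u / Cinf u))) :=
    (hal.rpow_const (Or.inl hs.ne')).mul_const _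
  rw [Cinf_rpow hC hCm h2 hCinfpos hu hs]
  refine tendsto_nhds_unique (hS.div hCc (Real.rpow_pos_of_pos hpos s).ne') (hR.congr fun i => ?_)
  have hai : 0 < a i := by exact_mod_cast ha0 i
  obtain ⟨h1, h3⟩ := rat_case hCm h2 hCinfpos hu hai
  rw [← h3, Pi.div_apply, h1]
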